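/- For the sequence a_n = 1/(2n-1) (the terms of Leibniz's series for π/4), the iterated forward differences satisfy, for every n ≥ 0, Δ^n a_1 = 2^n · n! / (1·3·5⋯(2n+1)), i.e. Δ^n a_1 = 2^n n! / (2n+1)!!. -/

import Mathlib

/-- Iterated forward difference: `iterDiff a 0 n = a n`,
`iterDiff a (r+1) n = iterDiff a r n - iterDiff a r (n+1)`. -/
noncomputable def iterDiff (a : ℕ → ℝ) : ℕ → ℕ → ℝ
  | 0, n => a n
  | r + 1, n => iterDiff a r n - iterDiff a r (n + 1)

/-! The products of `r` consecutive terms of `c` starting at `c 0` and at `c 1` share all but one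
factor each, so the difference of their reciprocals is `(c r - c 0) / (c 0 ⋯ c r)`. When `c` is an
arithmetic progression with step `d`, the numerator is `r * d`; iterating, the differences of
`1 / c` pick up the factors `d, 2 * d, 3 * d, …`. -/

theorem one_div_prod_range_sub_one_div_prod_range_succ {K : Type*} [Field K] {c : ℕ → K} {r : ℕ}
    (h_first : c 0 ≠ 0) (h_last : c r ≠ 0) :
    1 / ∏ i ∈ Finset.range r, c i - 1 / ∏ i ∈ Finset.range r, c (i + 1) =
      (c r - c 0) / ∏ i ∈ Finset.range (r + 1), c i := by
  have drop_last : 1 / ∏ i ∈ Finset.range r, c i = c r / ∏ i ∈ Finset.range (r + 1), c i := by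
    rw [Finset.prod_range_succ, div_mul_cancel_right₀ h_last, one_div]
  have drop_first :
      1 / ∏ i ∈ Finset.range r, c (i + 1) = c 0 / ∏ i ∈ Finset.range (r + 1), c i := by
    rw [Finset.prod_range_succ', div_mul_cancel_right₀ h_first, one_div]
  rw [drop_last, drop_first, sub_div]

theorem iterDiff_one_div_arithmetic_progression {a : ℕ → ℝ} {d x : ℝ}
    (ha : ∀ k : ℕ, a k = 1 / (d * k + x)) {r n : ℕ} (hne : ∀ i ≤ r, d * (n + i : ℕ) + x ≠ 0) :
    iterDiff a r n =
      d ^ r * r.factorial / ∏ i ∈ Finset.range (r + 1), (d * (n + i : ℕ) + x) := by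
  induction r generalizing n with
  | zero => simp [iterDiff, ha]
  | succ r ih =>
    have shift (i : ℕ) : n + 1 + i = n + (i + 1) := by ring
    have hne_succ : ∀ i ≤ r, d * (n + 1 + i : ℕ) + x ≠ 0 := fun i hi ↦
      shift i ▸ hne (i + 1) (Nat.succ_le_succ hi)
    have step : d * (n + (r + 1) : ℕ) + x - (d * (n + 0 : ℕ) + x) = d * (r + 1) := by
      push_cast
      ring
    have telescope := one_div_prod_range_sub_one_div_prod_range_succ
      (c := fun i ↦ d * (n + i : ℕ) + x) (hne 0 (Nat.zero_le _)) (hne (r + 1) le_rfl)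
    rw [step] at telescope
    calc
      iterDiff a (r + 1) n
      _ = d ^ r * r.factorial * (1 / ∏ i ∈ Finset.range (r + 1), (d * (n + i : ℕ) + x) -
            1 / ∏ i ∈ Finset.range (r + 1), (d * (n + (i + 1) : ℕ) + x)) := by
        rw [iterDiff, ih fun i hi ↦ hne i (Nat.le_succ_of_le hi), ih hne_succ]
        simp only [shift, mul_sub, mul_one_div]
      _ = d ^ (r + 1) * (r + 1).factorial /
            ∏ i ∈ Finset.range (r + 1 + 1), (d * (n + i : ℕ) + x) := by
        rw [telescope, Nat.factorial_succ]
        push_cast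
        ring

/-- For the terms `a n = 1 / (2n - 1)` of Leibniz's series for `π/4`, the iterated
differences at the first term are `Δ^n a 1 = 2^n · n! / (1·3·5⋯(2n+1)) = 2^n n!/(2n+1)‼`. -/
theorem iterDiff_leibniz (a : ℕ → ℝ) (ha : ∀ n, a n = 1 / (2 * (n : ℝ) - 1)) :
    ∀ n : ℕ, iterDiff a n 1
      = 2 ^ n * (Nat.factorial n : ℝ) / (Nat.doubleFactorial (2 * n + 1) : ℝ) := by
  intro n
  have odd_term (i : ℕ) : 2 * ((1 + i : ℕ) : ℝ) + -1 = (2 * i + 1 : ℕ) := by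
    push_cast
    ring
  have odd_prod : ∏ i ∈ Finset.range (n + 1), (2 * ((1 + i : ℕ) : ℝ) + -1) =
      (Nat.doubleFactorial (2 * n + 1) : ℝ) := by
    simp only [odd_term, Nat.doubleFactorial_eq_prod_odd, Finset.prod_range_succ', mul_zero,
      zero_add, mul_one, Nat.cast_prod, Nat.cast_one]
  have odd_term_ne_zero (i : ℕ) : 2 * ((1 + i : ℕ) : ℝ) + -1 ≠ 0 :=
    odd_term i ▸ Nat.cast_ne_zero.mpr (Nat.succ_ne_zero _)
  have ha_add (k : ℕ) : a k = 1 / (2 * k + -1) := by rw [ha, sub_eq_add_neg]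
  rw [iterDiff_one_div_arithmetic_progression ha_add fun i _ ↦ odd_term_ne_zero i, odd_prod]
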